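/- Assume n > (2γ + m(m−1))(R+1). Then the singular series 𝔖(b) = Σ_{q=1}^∞ q^{−mn} Σ_{a mod q, gcd(a,q)=1} S_{a,q}(b) is absolutely convergent. Moreover, for any ε > 0 and any Δ with 0 < Δ < (m+1)/(R+1), and any δ > 0 with 2δ/Δ < n/(2γ+m(m−1)) − (R+1), there is a constant K (depending only on A, m, n, ε, Δ, δ) such that |𝔖(b) − 𝔖(Π^Δ; b)| ≤ K·Π^{−2δ+ε}, uniformly in b. -/

import Mathlib

open scoped BigOperators
open MeasureTheory Matrix Filter

noncomputable section

/-- Index type for pairs `(i,j)` with `i ≤ j` (the `R = m(m+1)/2` upper-triangular positions). -/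
abbrev Idx (m : ℕ) : Type := {p : Fin m × Fin m // p.1 ≤ p.2}

instance idxNonempty (m : ℕ) [NeZero m] : Nonempty (Idx m) :=
  ⟨⟨(0, 0), le_rfl⟩⟩

/-- `e(z) = exp(2πiz)` -/
def eR (z : ℝ) : ℂ := Complex.exp (2 * Real.pi * Complex.I * z)

/-- `xᵢᵀ A xⱼ` for integer vectors. -/
def quadZ {m n : ℕ} (A : Matrix (Fin n) (Fin n) ℤ) (x : Fin m → Fin n → ℤ)
    (i j : Fin m) : ℤ :=
  ∑ s, ∑ t, x i s * A s t * x j t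

/-- `vᵢᵀ A vⱼ` for real vectors. -/
def quadR {m n : ℕ} (A : Matrix (Fin n) (Fin n) ℤ) (v : Fin m → Fin n → ℝ)
    (i j : Fin m) : ℝ :=
  ∑ s, ∑ t, v i s * (A s t : ℝ) * v j t

/-- The tuple `b = (B_{ij})_{1 ≤ i ≤ j ≤ m}`. -/
def bvec {m : ℕ} (B : Matrix (Fin m) (Fin m) ℤ) (p : Idx m) : ℤ := B p.1.1 p.1.2

/-- `γ_i`, defined by `B₁₁ = B_{ii}^{γ_i}`, i.e. `γ_i = log B₁₁ / log B_{ii}`. -/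
def gamI {m : ℕ} [NeZero m] (B : Matrix (Fin m) (Fin m) ℤ) (i : Fin m) : ℝ :=
  Real.log ((B 0 0 : ℤ) : ℝ) / Real.log ((B i i : ℤ) : ℝ)

/-- `γ = Σ 1/γ_i`. -/
def gamT {m : ℕ} [NeZero m] (B : Matrix (Fin m) (Fin m) ℤ) : ℝ :=
  ∑ i, (gamI B i)⁻¹

/-- `P_i = C^{1/γ_i} B_{ii}^{1/2}`. -/
def PP {m : ℕ} [NeZero m] (C : ℝ) (B : Matrix (Fin m) (Fin m) ℤ) (i : Fin m) : ℝ :=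
  C ^ (gamI B i)⁻¹ * ((B i i : ℤ) : ℝ) ^ ((1 : ℝ) / 2)

/-- `Π = ∏ P_i`. -/
def PiP {m : ℕ} [NeZero m] (C : ℝ) (B : Matrix (Fin m) (Fin m) ℤ) : ℝ :=
  ∏ i, PP C B i

/-- The box of integer tuples `(x₁,…,x_m)` with `|x_i| ≤ P_i` (max-norm). -/
def box (m n : ℕ) [NeZero m] (C : ℝ) (B : Matrix (Fin m) (Fin m) ℤ) :
    Finset (Fin m → Fin n → ℤ) :=
  Finset.Icc (fun i _ => -⌊PP C B i⌋) (fun i _ => ⌊PP C B i⌋)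

/-- The exponential sum `S(α, b)`. -/
def Ssum {m n : ℕ} [NeZero m] (A : Matrix (Fin n) (Fin n) ℤ) (C : ℝ)
    (B : Matrix (Fin m) (Fin m) ℤ) (α : Idx m → ℝ) (b : Idx m → ℤ) : ℂ :=
  ∑ x ∈ box m n C B,
    eR (∑ p : Idx m, α p * ((quadZ A x p.1.1 p.1.2 - b p : ℤ) : ℝ))

/-- The complete exponential sum `S_{a,q}(b)`. -/
def Saq {m n : ℕ} (A : Matrix (Fin n) (Fin n) ℤ) (q : ℤ) (a b : Idx m → ℤ) : ℂ :=
  ∑ z ∈ (Finset.Icc (fun _ _ => 0) (fun _ _ => q - 1) : Finset (Fin m → Fin n → ℤ)),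
    eR ((∑ p : Idx m, (a p : ℝ) * ((quadZ A z p.1.1 p.1.2 - b p : ℤ) : ℝ)) / (q : ℝ))

/-- Residue tuples `a (mod q)` with `gcd(q, a) = 1`. -/
def resid (m : ℕ) (q : ℤ) : Finset (Idx m → ℤ) :=
  (Finset.Icc (fun _ => 0) (fun _ => q - 1)).filter fun a =>
    Int.gcd q (Finset.univ.gcd a) = 1

/-- The `q`-th term of the singular series. -/
def STerm {m n : ℕ} (A : Matrix (Fin n) (Fin n) ℤ) (B : Matrix (Fin m) (Fin m) ℤ)
    (q : ℕ) : ℂ :=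
  ((q : ℂ) ^ (m * n))⁻¹ * ∑ a ∈ resid m (q : ℤ), Saq A (q : ℤ) a (bvec B)

/-- The truncated singular series `𝔖(Q; b)`. -/
def SingT {m n : ℕ} (A : Matrix (Fin n) (Fin n) ℤ) (B : Matrix (Fin m) (Fin m) ℤ)
    (Q : ℝ) : ℂ :=
  ∑ q ∈ Finset.Icc 1 ⌊Q⌋₊, STerm A B q

/-- The singular series `𝔖(b) = Σ_{q=1}^∞ q^{-mn} Σ_{a mod q, (a,q)=1} S_{a,q}(b)`. -/
def Sing {m n : ℕ} (A : Matrix (Fin n) (Fin n) ℤ) (B : Matrix (Fin m) (Fin m) ℤ) : ℂ :=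
  ∑' q : ℕ, STerm A B q

/-- The oscillatory integral `I` with weights `w_p`;
`I(P,β)` is obtained with `w_p = P_iP_jβ_{ij}` and `I(η)` with `w = η`. -/
def Iint {m n : ℕ} (A : Matrix (Fin n) (Fin n) ℤ) (w : Idx m → ℝ) : ℂ :=
  ∫ v in (Set.univ.pi fun _ : Fin m => Set.univ.pi fun _ : Fin n => Set.Icc (-1 : ℝ) 1),
    eR (∑ p : Idx m, w p * quadR A v p.1.1 p.1.2)

/-- The truncated singular integral `𝔍(Q; c)`. -/
def JintT {m n : ℕ} (A : Matrix (Fin n) (Fin n) ℤ) (Q : ℝ) (c : Idx m → ℝ) : ℂ :=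
  ∫ η in (Set.univ.pi fun _ : Idx m => Set.Icc (-Q) Q),
    Iint (n := n) A η * eR (-(∑ p : Idx m, η p * c p))

/-- The singular integral `𝔍(c)`. -/
def Jint {m n : ℕ} (A : Matrix (Fin n) (Fin n) ℤ) (c : Idx m → ℝ) : ℂ :=
  ∫ η : Idx m → ℝ, Iint (n := n) A η * eR (-(∑ p : Idx m, η p * c p))

/-- The major arc `M_{a,q}(Δ)` (with constant `c₀`). -/
def MArc {m : ℕ} [NeZero m] (C : ℝ) (B : Matrix (Fin m) (Fin m) ℤ) (c₀ Δ : ℝ)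
    (q : ℤ) (a : Idx m → ℤ) : Set (Idx m → ℝ) :=
  {α | (∀ p, 0 ≤ α p ∧ α p < 1) ∧
    ∀ p : Idx m, |(q : ℝ) * α p - (a p : ℝ)| ≤
      c₀ * PiP C B ^ Δ * (PP C B p.1.1 * PP C B p.1.2)⁻¹}

/-- The enlarged major arc `M'_{a,q}(Δ)` (with constant `c₀`). -/
def MArc' {m : ℕ} [NeZero m] (C : ℝ) (B : Matrix (Fin m) (Fin m) ℤ) (c₀ Δ : ℝ)
    (q : ℤ) (a : Idx m → ℤ) : Set (Idx m → ℝ) :=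
  {α | (∀ p, 0 ≤ α p ∧ α p < 1) ∧
    ∀ p : Idx m, |(q : ℝ) * α p - (a p : ℝ)| ≤
      c₀ * (q : ℝ) * PiP C B ^ Δ * (PP C B p.1.1 * PP C B p.1.2)⁻¹}

/-- Admissible pairs `(q, a)`: `1 ≤ q ≤ c₀Π^Δ`, `0 ≤ a_{ij} < q`, `gcd(q,a) = 1`. -/
def validAQ {m : ℕ} [NeZero m] (C : ℝ) (B : Matrix (Fin m) (Fin m) ℤ) (c₀ Δ : ℝ)
    (q : ℤ) (a : Idx m → ℤ) : Prop :=
  1 ≤ q ∧ (q : ℝ) ≤ c₀ * PiP C B ^ Δ ∧ (∀ p, 0 ≤ a p ∧ a p < q) ∧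
    Int.gcd q (Finset.univ.gcd a) = 1

/-- The major arcs `M(Δ)`. -/
def MSet {m : ℕ} [NeZero m] (C : ℝ) (B : Matrix (Fin m) (Fin m) ℤ) (c₀ Δ : ℝ) :
    Set (Idx m → ℝ) :=
  ⋃ q : ℤ, ⋃ a : Idx m → ℤ, ⋃ _ : validAQ C B c₀ Δ q a, MArc C B c₀ Δ q a

/-- `N(A,B)`: the number of integral representations of `B` by `A`. -/
def NAB (m n : ℕ) (A : Matrix (Fin n) (Fin n) ℤ) (B : Matrix (Fin m) (Fin m) ℤ) : ℕ :=
  Nat.card {X : Matrix (Fin n) (Fin m) ℤ | Xᵀ * A * X = B}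

/-- `#{X mod q : XᵀAX ≡ B (mod q)}`. -/
def locCount (m n : ℕ) (A : Matrix (Fin n) (Fin n) ℤ) (B : Matrix (Fin m) (Fin m) ℤ)
    (q : ℕ) : ℕ :=
  Nat.card {X : Matrix (Fin n) (Fin m) (ZMod q) |
    Xᵀ * A.map ((↑) : ℤ → ZMod q) * X = B.map ((↑) : ℤ → ZMod q)}

/-- The archimedean density `α_∞(A,B)`. -/
def alphaInf (m n : ℕ) (A : Matrix (Fin n) (Fin n) ℤ)
    (B : Matrix (Fin m) (Fin m) ℤ) : ℝ :=
  ((A.det : ℤ) : ℝ) ^ (-(m : ℝ) / 2) * ((B.det : ℤ) : ℝ) ^ (((n : ℝ) - m - 1) / 2) *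
    Real.pi ^ ((m : ℝ) * (2 * (n : ℝ) - m + 1) / 4) *
    ∏ j ∈ Finset.Ioc (n - m) n, (Real.Gamma ((j : ℝ) / 2))⁻¹

/-- `max_{1≤i≤j≤m} |η_{ij}|`. -/
def maxAbs {m : ℕ} [NeZero m] (η : Idx m → ℝ) : ℝ := ⨆ p : Idx m, |η p|

/-! Modulo `q`, the sum `S_{a,q}(b)` is, up to a factor of absolute value one, a complete
exponential sum of the quadratic form `Z ↦ tr(Uᵀ Z A Zᵀ)` on `m × n` matrices, `U` being the upper
triangular matrix with entries `a`. One Weyl differencing bounds its square by `q^{mn}` times the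
number of `H` modulo `q` with `(U + Uᵀ) H A = 0`. Since `gcd(a, q) = 1`, a multiple `N (U + Uᵀ)`
vanishes modulo `q` only if `q ∣ 2N`, so that `U + Uᵀ` has at most `2 q^{m-1}` kernel vectors,
while right multiplication by `A` costs a factor `|det A|^{mn}`. Hence `S_{a,q}(b) ≪ q^{mn - n/2}`,
the `q`-th term of the singular series is `≪ q^{R - n/2}` uniformly in `b`, and the tails are those
of a convergent `p`-series.
-/

section WeylDifferencing

variable {G R : Type*} [AddCommGroup G] [Fintype G] [AddCommGroup R]

theorem sum_addChar_mul_conj_eq_of_polar [Finite R] (ψ : AddChar R ℂ) (f : G → R)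
    (L : G →+ G →+ R) (hf : ∀ z h, f (z + h) = f z + f h + L h z) :
    (∑ z, ψ (f z)) * starRingEnd ℂ (∑ z, ψ (f z)) = ∑ h, ψ (f h) * ∑ z, ψ (L h z) := by
  have hshift (z : G) : ∑ h, ψ (f h) * starRingEnd ℂ (ψ (f z)) = ∑ h, ψ (f h) * ψ (L h z) := by
    rw [← Equiv.sum_comp (Equiv.addLeft z)]
    refine Finset.sum_congr rfl fun h _ => ?_
    rw [← AddChar.map_neg_eq_conj, ← AddChar.map_add_eq_mul, ← AddChar.map_add_eq_mul,
      Equiv.coe_addLeft, hf]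
    congr 1
    abel
  calc
    _ = ∑ z, ∑ h, ψ (f h) * starRingEnd ℂ (ψ (f z)) := by
      rw [map_sum, Finset.sum_mul_sum, Finset.sum_comm]
    _ = ∑ z, ∑ h, ψ (f h) * ψ (L h z) := Finset.sum_congr rfl fun z _ => hshift z
    _ = _ := by
      rw [Finset.sum_comm]
      simp only [Finset.mul_sum]

theorem norm_sum_addChar_sq_le_card_mul_card_ker [Finite R] {ψ : AddChar R ℂ}
    (hψ : Function.Injective ψ) (f : G → R) (L : G →+ G →+ R)
    (hf : ∀ z h, f (z + h) = f z + f h + L h z) :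
    ‖∑ z, ψ (f z)‖ ^ 2 ≤ Nat.card G * Nat.card L.ker := by
  classical
  have horth (h : G) : ‖∑ z, ψ (L h z)‖ = if h ∈ L.ker then (Nat.card G : ℝ) else 0 := by
    have htriv : ψ.compAddMonoidHom (L h) = 0 ↔ h ∈ L.ker := by
      rw [AddMonoidHom.mem_ker, AddChar.eq_zero_iff, DFunLike.ext_iff]
      exact forall_congr' fun z => by
        rw [AddChar.compAddMonoidHom_apply, ← ψ.map_zero_eq_one, hψ.eq_iff]
        rfl
    have hsum := AddChar.sum_eq_ite (ψ.compAddMonoidHom (L h))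
    simp only [AddChar.compAddMonoidHom_apply, htriv] at hsum
    rw [hsum]
    split_ifs <;> simp
  calc ‖∑ z, ψ (f z)‖ ^ 2 = ‖∑ h, ψ (f h) * ∑ z, ψ (L h z)‖ := by
        rw [← sum_addChar_mul_conj_eq_of_polar ψ f L hf, norm_mul, RCLike.norm_conj, sq]
    _ ≤ ∑ h, ‖∑ z, ψ (L h z)‖ :=
        norm_sum_le_of_le _ fun h _ => by rw [norm_mul, AddChar.norm_apply, one_mul]
    _ = Nat.card G * Nat.card L.ker := by
        simp only [horth, ← Finset.sum_filter, Finset.sum_const, nsmul_eq_mul]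
        rw [mul_comm, Nat.card_eq_fintype_card (α := L.ker), Fintype.card_subtype]

end WeylDifferencing

section KernelCounting

theorem card_ker_comp_le {G H K : Type*} [AddCommGroup G] [AddCommGroup H] [AddCommGroup K]
    [Finite G] [Finite H] (f : G →+ H) (g : H →+ K) :
    Nat.card (g.comp f).ker ≤ Nat.card f.ker * Nat.card g.ker := by
  let f' : (g.comp f).ker →+ g.ker :=
    (f.comp (g.comp f).ker.subtype).codRestrict g.ker fun x => x.2
  have hker : Nat.card f'.ker ≤ Nat.card f.ker :=
    Nat.card_le_card_of_injective (fun x => (⟨x.1.1, congrArg Subtype.val x.2⟩ : f.ker))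
      fun _ _ hxy => Subtype.ext (Subtype.ext (congrArg (Subtype.val : f.ker → G) hxy))
  have hrange : Nat.card f'.range ≤ Nat.card g.ker :=
    Nat.card_le_card_of_injective _ Subtype.val_injective
  rw [← AddSubgroup.card_mul_index f'.ker, AddSubgroup.index_ker]
  exact Nat.mul_le_mul hker hrange

theorem mul_card_ker_le_of_dvd {G H : Type*} [AddCommGroup G] [AddCommGroup H] [Finite G]
    (f : G →+ H) {q d : ℕ} (hd : 0 < d) (hf : ∀ N : ℕ, N • f = 0 → q ∣ d * N) :
    q * Nat.card f.ker ≤ d * Nat.card G := by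
  have : Finite f.range := Set.finite_range f
  have hkill : Nat.card f.range • f = 0 := by
    ext x
    exact congrArg Subtype.val
      (card_nsmul_eq_zero' : Nat.card f.range • (⟨f x, x, rfl⟩ : f.range) = 0)
  have hq : q ≤ d * Nat.card f.range :=
    Nat.le_of_dvd (Nat.mul_pos hd Nat.card_pos) (hf _ hkill)
  calc q * Nat.card f.ker ≤ d * Nat.card f.range * Nat.card f.ker := Nat.mul_le_mul_right _ hq
    _ = d * Nat.card G := by
        rw [← AddSubgroup.card_mul_index f.ker, AddSubgroup.index_ker, mul_assoc,
          mul_comm (Nat.card f.range)]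

theorem card_zsmul_eq_zero_le {G : Type*} [AddGroup G] [IsAddCyclic G] [Finite G] {d : ℤ}
    (hd : d ≠ 0) : Nat.card {x : G // d • x = 0} ≤ d.natAbs := by
  classical
  have := Fintype.ofFinite G
  simp only [← natAbs_nsmul_eq_zero]
  rw [Nat.card_eq_fintype_card, Fintype.card_subtype]
  exact IsAddCyclic.card_nsmul_eq_zero_le (Int.natAbs_pos.2 hd)

variable {ι κ : Type*} [Fintype κ]

theorem mul_card_ker_mulVecLin_le {R : Type*} [CommRing R] [Finite R] (T : Matrix ι κ R)
    {q d : ℕ} (hd : 0 < d) (hT : ∀ N : ℕ, N • T = 0 → q ∣ d * N) :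
    q * Nat.card T.mulVecLin.toAddMonoidHom.ker ≤ d * Nat.card R ^ Fintype.card κ := by
  classical
  have hker := mul_card_ker_le_of_dvd T.mulVecLin.toAddMonoidHom hd fun N hN => hT N <| by
    ext i j
    simpa using congrFun (DFunLike.congr_fun hN (Pi.single j 1)) i
  simpa [Nat.card_fun] using hker

theorem card_ker_mulLeft {l R : Type*} [Fintype l] [CommRing R] (T : Matrix ι κ R) :
    Nat.card (addMonoidHomMulLeft T : Matrix κ l R →+ Matrix ι l R).ker =
      Nat.card T.mulVecLin.toAddMonoidHom.ker ^ Fintype.card l := by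
  rw [← Nat.card_eq_fintype_card, ← Nat.card_fun]
  exact Nat.card_congr
    { toFun := fun X s => ⟨fun j => X.1 j s, funext fun i => congrFun (congrFun X.2 i) s⟩
      invFun := fun v => ⟨of fun j s => (v s).1 j, ext fun i s => congrFun (v s).2 i⟩ }

theorem det_smul_eq_zero_of_mul_eq_zero {R : Type*} [CommRing R] [DecidableEq κ]
    {X : Matrix ι κ R} {M : Matrix κ κ R} (h : X * M = 0) : M.det • X = 0 := by
  rw [← Matrix.mul_one X, ← Matrix.mul_smul, ← mul_adjugate, ← Matrix.mul_assoc, h, Matrix.zero_mul]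

variable [Fintype ι]

theorem card_ker_mulRight_le [DecidableEq κ] {q : ℕ} [NeZero q] {A : Matrix κ κ ℤ}
    (hA : A.det ≠ 0) :
    Nat.card (addMonoidHomMulRight (A.map ((↑) : ℤ → ZMod q)) : Matrix ι κ (ZMod q) →+ _).ker ≤
      A.det.natAbs ^ (Fintype.card ι * Fintype.card κ) := by
  have hdet (X : Matrix ι κ (ZMod q)) (hX : X * A.map ((↑) : ℤ → ZMod q) = 0) (i : ι) (s : κ) :
      A.det • X i s = 0 := by
    have h := congrFun (congrFun (det_smul_eq_zero_of_mul_eq_zero hX) i) s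
    rwa [← Int.cast_det, Matrix.smul_apply, Int.cast_smul_eq_zsmul] at h
  calc
    _ ≤ Nat.card (ι → κ → {x : ZMod q // A.det • x = 0}) :=
      Nat.card_le_card_of_injective (fun X i s => ⟨X.1 i s, hdet X.1 X.2 i s⟩) fun X Y hXY =>
        Subtype.ext (ext fun i s => congrArg Subtype.val (congrFun (congrFun hXY i) s))
    _ = Nat.card {x : ZMod q // A.det • x = 0} ^ (Fintype.card ι * Fintype.card κ) := by
      simp [Nat.card_fun, ← pow_mul, mul_comm]
    _ ≤ _ := Nat.pow_le_pow_left (card_zsmul_eq_zero_le hA) _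

theorem pow_mul_card_ker_mulLeft_comp_mulRight_le [DecidableEq κ] {q : ℕ} [NeZero q]
    {A : Matrix κ κ ℤ} (hA : A.det ≠ 0) (T : Matrix ι ι (ZMod q)) {d : ℕ} (hd : 0 < d)
    (hT : ∀ N : ℕ, N • T = 0 → q ∣ d * N) :
    q ^ Fintype.card κ * Nat.card ((addMonoidHomMulLeft T).comp
        (addMonoidHomMulRight (A.map ((↑) : ℤ → ZMod q)) : Matrix ι κ (ZMod q) →+ _)).ker ≤
      A.det.natAbs ^ (Fintype.card ι * Fintype.card κ) * d ^ Fintype.card κ *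
        q ^ (Fintype.card ι * Fintype.card κ) := by
  set k := Nat.card T.mulVecLin.toAddMonoidHom.ker
  have hk : q * k ≤ d * q ^ Fintype.card ι := by
    simpa only [Nat.card_zmod] using mul_card_ker_mulVecLin_le T hd hT
  have hcomp := (card_ker_comp_le
    (addMonoidHomMulRight (A.map ((↑) : ℤ → ZMod q)) : Matrix ι κ (ZMod q) →+ _)
    (addMonoidHomMulLeft T)).trans
      (Nat.mul_le_mul (card_ker_mulRight_le hA) (card_ker_mulLeft T).le)
  calc
    _ ≤ q ^ Fintype.card κ *
        (A.det.natAbs ^ (Fintype.card ι * Fintype.card κ) * k ^ Fintype.card κ) :=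
      Nat.mul_le_mul_left _ hcomp
    _ = A.det.natAbs ^ (Fintype.card ι * Fintype.card κ) * (q * k) ^ Fintype.card κ := by ring
    _ ≤ A.det.natAbs ^ (Fintype.card ι * Fintype.card κ) *
        (d * q ^ Fintype.card ι) ^ Fintype.card κ := by gcongr
    _ = _ := by ring

end KernelCounting

section TraceForm

variable {ι κ R S : Type*} [Fintype ι] [Fintype κ] [CommRing R] [CommRing S]

/-- The quadratic form `Z ↦ ∑ᵢⱼ uᵢⱼ zᵢᵀ M zⱼ` in the rows `zᵢ` of `Z`. -/
def traceForm (U : Matrix ι ι R) (M : Matrix κ κ R) (Z : Matrix ι κ R) : R :=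
  (Uᵀ * (Z * M * Zᵀ)).trace

/-- The polar form of `traceForm U M` for symmetric `M`, as a biadditive map. -/
def traceFormPolar (U : Matrix ι ι R) (M : Matrix κ κ R) :
    Matrix ι κ R →+ Matrix ι κ R →+ R :=
  AddMonoidHom.mk'
    (fun H => AddMonoidHom.mk' (fun Z => ((U + Uᵀ) * (H * M) * Zᵀ).trace) fun X Y => by
      simp only [transpose_add, Matrix.mul_add, trace_add])
    fun X Y => by
      ext Z
      simp only [AddMonoidHom.mk'_apply, AddMonoidHom.add_apply, Matrix.add_mul, Matrix.mul_add,
        trace_add]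

theorem traceForm_add (U : Matrix ι ι R) {M : Matrix κ κ R} (hM : M.IsSymm)
    (Z H : Matrix ι κ R) :
    traceForm U M (Z + H) = traceForm U M Z + traceForm U M H + traceFormPolar U M H Z := by
  have hcross : (Uᵀ * (Z * M * Hᵀ)).trace = (U * (H * M) * Zᵀ).trace := by
    rw [← trace_transpose, Matrix.mul_assoc U, trace_mul_comm U]
    simp only [transpose_mul, transpose_transpose, hM.eq, Matrix.mul_assoc]
  simp only [traceForm, traceFormPolar, AddMonoidHom.mk'_apply, transpose_add, Matrix.add_mul,
    Matrix.mul_add, trace_add, hcross, Matrix.mul_assoc Uᵀ]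
  ring

theorem ker_traceFormPolar (U : Matrix ι ι R) (M : Matrix κ κ R) :
    (traceFormPolar U M).ker =
      ((addMonoidHomMulLeft (U + Uᵀ)).comp (addMonoidHomMulRight M)).ker := by
  ext H
  change traceFormPolar U M H = 0 ↔ (U + Uᵀ) * (H * M) = 0
  rw [ext_iff_trace_mul_right, DFunLike.ext_iff,
    (transposeAddEquiv ι κ R).surjective.forall]
  simp [traceFormPolar]

theorem map_traceForm (φ : R →+* S) (U : Matrix ι ι R) (M : Matrix κ κ R) (Z : Matrix ι κ R) :
    φ (traceForm U M Z) = traceForm (U.map φ) (M.map φ) (Z.map φ) := by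
  simp only [traceForm, AddMonoidHom.map_trace, Matrix.map_mul, transpose_map]

theorem pow_mul_norm_sum_stdAddChar_traceForm_sq_le [DecidableEq ι] [DecidableEq κ]
    {q : ℕ} [NeZero q] {A : Matrix κ κ ℤ} (hAs : A.IsSymm) (hA : A.det ≠ 0)
    (U : Matrix ι ι (ZMod q)) {d : ℕ} (hd : 0 < d) (hU : ∀ N : ℕ, N • (U + Uᵀ) = 0 → q ∣ d * N) :
    (q : ℝ) ^ Fintype.card κ *
        ‖∑ Z : Matrix ι κ (ZMod q), ZMod.stdAddChar (traceForm U (A.map (↑)) Z)‖ ^ 2 ≤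
      (A.det.natAbs ^ (Fintype.card ι * Fintype.card κ) * d ^ Fintype.card κ : ℕ) *
        ((q : ℝ) ^ (Fintype.card ι * Fintype.card κ)) ^ 2 := by
  set M : Matrix κ κ (ZMod q) := A.map (↑)
  set k := Nat.card (traceFormPolar U M).ker with hk
  have hweyl := norm_sum_addChar_sq_le_card_mul_card_ker ZMod.injective_stdAddChar
    (traceForm U M) (traceFormPolar U M) (traceForm_add U (hAs.map _))
  have hcard : Nat.card (Matrix ι κ (ZMod q)) = q ^ (Fintype.card ι * Fintype.card κ) := by
    simp [Matrix, ← pow_mul, mul_comm]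
  have hcount := pow_mul_card_ker_mulLeft_comp_mulRight_le hA (U + Uᵀ) hd hU
  rw [← ker_traceFormPolar, ← hk] at hcount
  rw [hcard, ← hk] at hweyl
  calc
    _ ≤ (q : ℝ) ^ Fintype.card κ * ((q ^ (Fintype.card ι * Fintype.card κ) : ℕ) * k) := by gcongr
    _ = (q : ℝ) ^ (Fintype.card ι * Fintype.card κ) * (q ^ Fintype.card κ * k : ℕ) := by
      push_cast; ring
    _ ≤ (q : ℝ) ^ (Fintype.card ι * Fintype.card κ) *
        (A.det.natAbs ^ (Fintype.card ι * Fintype.card κ) * d ^ Fintype.card κ *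
          q ^ (Fintype.card ι * Fintype.card κ) : ℕ) := by gcongr
    _ = _ := by push_cast; ring

end TraceForm

section UpperTriangular

variable {m : ℕ}

/-- The upper triangular matrix with entries `a`, the coefficient matrix of the quadratic form in
`Saq`. -/
def upperTri {R : Type*} [Zero R] (a : Idx m → R) : Matrix (Fin m) (Fin m) R :=
  of fun i j => if h : i ≤ j then a ⟨(i, j), h⟩ else 0

theorem trace_transpose_upperTri_mul {R : Type*} [NonUnitalNonAssocSemiring R] (a : Idx m → R)
    (N : Matrix (Fin m) (Fin m) R) :
    ((upperTri a)ᵀ * N).trace = ∑ p : Idx m, a p * N p.1.1 p.1.2 := by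
  have hsub : ∑ p : Idx m, upperTri a p.1.1 p.1.2 * N p.1.1 p.1.2 =
      ∑ x : Fin m × Fin m with x.1 ≤ x.2, upperTri a x.1 x.2 * N x.1 x.2 :=
    (Finset.sum_subtype (Finset.univ.filter fun x : Fin m × Fin m => x.1 ≤ x.2) (by simp)
      fun x => upperTri a x.1 x.2 * N x.1 x.2).symm
  calc ((upperTri a)ᵀ * N).trace = ∑ x : Fin m × Fin m, upperTri a x.1 x.2 * N x.1 x.2 := by
        simp only [trace, diag_apply, mul_apply, transpose_apply]
        rw [Finset.sum_comm, Fintype.sum_prod_type]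
    _ = ∑ x : Fin m × Fin m with x.1 ≤ x.2, upperTri a x.1 x.2 * N x.1 x.2 := by
        refine (Finset.sum_filter_of_ne fun x _ hx => ?_).symm
        by_contra hlt
        exact hx (by simp [upperTri, hlt])
    _ = ∑ p : Idx m, a p * N p.1.1 p.1.2 := by
        rw [← hsub]
        exact Finset.sum_congr rfl fun p _ => by simp [upperTri, p.2]

theorem dvd_two_mul_of_nsmul_upperTri_eq_zero {q : ℕ} {a : Idx m → ℤ}
    (ha : Int.gcd q (Finset.univ.gcd a) = 1) {N : ℕ}
    (hN : N • ((upperTri a).map ((↑) : ℤ → ZMod q) + ((upperTri a).map (↑))ᵀ) = 0) :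
    q ∣ 2 * N := by
  have hdvd (p : Idx m) : (q : ℤ) ∣ 2 * N * a p := by
    obtain ⟨⟨i, j⟩, hij : i ≤ j⟩ := p
    have h := congrFun (congrFun hN i) j
    rw [← ZMod.intCast_zmod_eq_zero_iff_dvd]
    push_cast
    rcases hij.eq_or_lt with rfl | hlt
    · simp only [Matrix.smul_apply, Matrix.add_apply, transpose_apply, map_apply, upperTri,
        of_apply, le_refl, dite_true, nsmul_eq_mul, Matrix.zero_apply] at h
      linear_combination h
    · simp only [Matrix.smul_apply, Matrix.add_apply, transpose_apply, map_apply, upperTri,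
        of_apply, hij, hlt.not_ge, dite_true, dite_false, Int.cast_zero, add_zero, nsmul_eq_mul,
        Matrix.zero_apply] at h
      linear_combination 2 * h
  have hgcd : (q : ℤ) ∣ 2 * N * Finset.univ.gcd a := by
    have h := Finset.dvd_gcd fun p (_ : p ∈ Finset.univ) => hdvd p
    rw [Finset.gcd_mul_left] at h
    exact h.trans (mul_dvd_mul_right (normalize_associated _).dvd _)
  exact_mod_cast (Int.isCoprime_iff_gcd_eq_one.2 ha).dvd_of_dvd_mul_right hgcd

theorem traceForm_upperTri {n : ℕ} (A : Matrix (Fin n) (Fin n) ℤ) (a : Idx m → ℤ)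
    (z : Fin m → Fin n → ℤ) :
    traceForm (upperTri a) A (of z) = ∑ p : Idx m, a p * quadZ A z p.1.1 p.1.2 := by
  rw [traceForm, trace_transpose_upperTri_mul]
  refine Finset.sum_congr rfl fun p _ => ?_
  simp only [mul_apply, of_apply, transpose_apply, quadZ, Finset.sum_mul]
  rw [Finset.sum_comm]

end UpperTriangular

section CompleteSum

theorem eR_intCast_div (q : ℕ) [NeZero q] (k : ℤ) :
    eR (k / q) = ZMod.stdAddChar (k : ZMod q) := by
  rw [ZMod.stdAddChar_coe, eR]
  push_cast
  rw [mul_div_assoc]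

theorem sum_Icc_intCast_zmod {ι κ M : Type*} [Fintype ι] [Fintype κ] [DecidableEq ι]
    [DecidableEq κ] [AddCommMonoid M] (q : ℕ) [NeZero q] (g : Matrix ι κ (ZMod q) → M) :
    ∑ z ∈ Finset.Icc (fun _ _ => 0 : ι → κ → ℤ) (fun _ _ => (q : ℤ) - 1),
      g ((of z).map (↑)) = ∑ Z, g Z := by
  refine Finset.sum_nbij' (fun z => (of z).map (↑)) (fun Z i s => ((Z i s).val : ℤ))
    (fun _ _ => Finset.mem_univ _) (fun Z _ => ?_) (fun z hz => ?_) (fun Z _ => ?_)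
    fun _ _ => rfl
  · exact Finset.mem_Icc.2 ⟨fun i s => Int.natCast_nonneg _, fun i s =>
      Int.le_sub_one_of_lt (Int.ofNat_lt.2 (ZMod.val_lt (Z i s)))⟩
  · obtain ⟨hz0, hzq⟩ := Finset.mem_Icc.1 hz
    funext i s
    simp only [map_apply, of_apply, ZMod.val_intCast]
    exact Int.emod_eq_of_lt (hz0 i s) (Int.lt_of_le_sub_one (hzq i s))
  · ext i s
    simp

variable {m n q : ℕ} [NeZero q] {A : Matrix (Fin n) (Fin n) ℤ}

theorem saq_eq_mul_sum_stdAddChar_traceForm (A : Matrix (Fin n) (Fin n) ℤ) (a b : Idx m → ℤ) :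
    Saq A q a b = ZMod.stdAddChar ((-∑ p, a p * b p : ℤ) : ZMod q) *
      ∑ Z : Matrix (Fin m) (Fin n) (ZMod q),
        ZMod.stdAddChar (traceForm ((upperTri a).map (↑)) (A.map (↑)) Z) := by
  rw [Finset.mul_sum, ← sum_Icc_intCast_zmod, Saq]
  refine Finset.sum_congr rfl fun z _ => ?_
  have hphase : ∑ p, (a p : ℝ) * ((quadZ A z p.1.1 p.1.2 - b p : ℤ) : ℝ) =
      ((-∑ p, a p * b p + traceForm (upperTri a) A (of z) : ℤ) : ℝ) := by
    rw [traceForm_upperTri, ← Finset.sum_neg_distrib, ← Finset.sum_add_distrib]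
    push_cast
    exact Finset.sum_congr rfl fun p _ => by ring
  rw [hphase, Int.cast_natCast, eR_intCast_div, Int.cast_add, AddChar.map_add_eq_mul]
  congr 2
  exact map_traceForm (Int.castRingHom (ZMod q)) (upperTri a) A (of z)

/-- The constant of the Weyl bound for `Saq`: the factor `|det A| ^ (m * n)` comes from the kernel
of right multiplication by `A`, the factor `2 ^ n` from the diagonal of `U + Uᵀ`. -/
def weylConst (m : ℕ) {n : ℕ} (A : Matrix (Fin n) (Fin n) ℤ) : ℕ :=
  A.det.natAbs ^ (m * n) * 2 ^ n

theorem norm_saq_le (hAs : A.IsSymm) (hA : A.det ≠ 0) {a : Idx m → ℤ} (b : Idx m → ℤ)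
    (ha : Int.gcd q (Finset.univ.gcd a) = 1) :
    ‖Saq A q a b‖ ≤ weylConst m A * ((q : ℝ) ^ (m * n) * (q : ℝ) ^ (-(n / 2) : ℝ)) := by
  have hq : (0 : ℝ) < q := Nat.cast_pos.2 (NeZero.pos q)
  have hone : (1 : ℝ) ≤ weylConst m A := by
    exact_mod_cast Nat.one_le_iff_ne_zero.2 (by simp [weylConst, hA])
  have hsqrt : ((q : ℝ) ^ (n / 2 : ℝ)) ^ 2 = (q : ℝ) ^ n := by
    rw [← Real.rpow_mul_natCast hq.le, Nat.cast_two, div_mul_cancel₀ _ two_ne_zero,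
      Real.rpow_natCast]
  have hweyl := pow_mul_norm_sum_stdAddChar_traceForm_sq_le hAs hA _ two_pos
    fun N => dvd_two_mul_of_nsmul_upperTri_eq_zero ha
  simp only [Fintype.card_fin] at hweyl
  rw [Real.rpow_neg hq.le, ← mul_assoc, le_mul_inv_iff₀ (by positivity),
    saq_eq_mul_sum_stdAddChar_traceForm, norm_mul, AddChar.norm_apply, one_mul]
  refine le_of_sq_le_sq ?_ (by positivity)
  rw [mul_pow, hsqrt, mul_comm, mul_pow]
  exact hweyl.trans (by gcongr; exact le_self_pow₀ hone two_ne_zero)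

end CompleteSum

section SingularSeries

variable {m n : ℕ}

theorem card_idx (m : ℕ) : (Fintype.card (Idx m) : ℝ) = m * (m + 1) / 2 := by
  rw [← Fintype.card_congr (Sym2.sortEquiv (α := Fin m)), Sym2.card, Fintype.card_fin,
    Nat.cast_choose_two]
  push_cast
  ring

theorem resid_zero (m : ℕ) : resid m 0 = ∅ := by
  refine Finset.filter_eq_empty_iff.2 fun a ha hgcd => ?_
  obtain ⟨hle, hge⟩ := Finset.mem_Icc.1 ha
  have : IsEmpty (Idx m) := ⟨fun p => by have h := (hle p).trans (hge p); norm_num at h⟩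
  simp at hgcd

theorem card_resid_le (m q : ℕ) : (resid m q).card ≤ q ^ Fintype.card (Idx m) := by
  refine (Finset.card_filter_le _ _).trans ?_
  simp [Pi.card_Icc]

theorem sum_norm_saq_le {A : Matrix (Fin n) (Fin n) ℤ} (hAs : A.IsSymm) (hA : A.det ≠ 0)
    (b : Idx m → ℤ) (q : ℕ) :
    ((q : ℝ) ^ (m * n))⁻¹ * ∑ a ∈ resid m q, ‖Saq A q a b‖ ≤
      weylConst m A * (q : ℝ) ^ ((m * (m + 1) / 2 : ℝ) - n / 2) := by
  rcases q.eq_zero_or_pos with rfl | hq0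
  · simp only [Nat.cast_zero, resid_zero, Finset.sum_empty, mul_zero]
    positivity
  have : NeZero q := ⟨hq0.ne'⟩
  have hq : (0 : ℝ) < q := Nat.cast_pos.2 hq0
  calc
    _ ≤ ((q : ℝ) ^ (m * n))⁻¹ * ((resid m q).card •
        (weylConst m A * ((q : ℝ) ^ (m * n) * (q : ℝ) ^ (-(n / 2) : ℝ)))) := by
      gcongr
      exact Finset.sum_le_card_nsmul _ _ _ fun a ha =>
        norm_saq_le hAs hA b (Finset.mem_filter.1 ha).2
    _ = weylConst m A * ((resid m q).card * (q : ℝ) ^ (-(n / 2) : ℝ)) := by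
      rw [nsmul_eq_mul]
      field_simp
    _ ≤ weylConst m A * ((q : ℝ) ^ Fintype.card (Idx m) * (q : ℝ) ^ (-(n / 2) : ℝ)) := by
      gcongr
      exact_mod_cast card_resid_le m q
    _ = _ := by
      rw [← Real.rpow_natCast, ← Real.rpow_add hq, card_idx, sub_eq_add_neg]

theorem norm_sTerm_le (A : Matrix (Fin n) (Fin n) ℤ) (B : Matrix (Fin m) (Fin m) ℤ) (q : ℕ) :
    ‖STerm A B q‖ ≤ ((q : ℝ) ^ (m * n))⁻¹ * ∑ a ∈ resid m q, ‖Saq A q a (bvec B)‖ := by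
  rw [STerm, norm_mul, norm_inv, norm_pow, Complex.norm_natCast]
  gcongr
  exact norm_sum_le _ _

theorem norm_tsum_sub_sum_Icc_le {E : Type*} [NormedAddCommGroup E] [CompleteSpace E]
    {f : ℕ → E} {c s κ Q : ℝ} (hs : 1 < s) (hκ : 0 ≤ κ) (hQ : 0 < Q)
    (hf : ∀ q : ℕ, ‖f q‖ ≤ c * (q : ℝ) ^ (-(s + κ))) :
    ‖∑' q, f q - ∑ q ∈ Finset.Icc 1 ⌊Q⌋₊, f q‖ ≤ c * (∑' q : ℕ, (q : ℝ) ^ (-s)) * Q ^ (-κ) := by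
  have hc : 0 ≤ c := by simpa using (norm_nonneg _).trans (hf 1)
  have hf0 : f 0 = 0 := by
    have h := hf 0
    rw [Nat.cast_zero, Real.zero_rpow (by linarith), mul_zero] at h
    exact norm_le_zero_iff.1 h
  have hsum : Summable fun q : ℕ => (q : ℝ) ^ (-s) := Real.summable_nat_rpow.2 (by linarith)
  have hfsum : Summable f :=
    .of_norm_bounded ((Real.summable_nat_rpow.2 (by linarith)).mul_left c) hf
  set k := ⌊Q⌋₊ + 1
  have hhead : ∑ q ∈ Finset.Icc 1 ⌊Q⌋₊, f q = ∑ q ∈ Finset.range k, f q := by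
    rw [Finset.range_eq_Ico, Finset.sum_eq_sum_Ico_succ_bot (Nat.succ_pos _), hf0, zero_add]
    rfl
  have htail (i : ℕ) : ‖f (i + k)‖ ≤ c * Q ^ (-κ) * ((i + k : ℕ) : ℝ) ^ (-s) := by
    have hQk : Q ≤ (i + k : ℕ) :=
      (Nat.lt_floor_add_one Q).le.trans (by exact_mod_cast Nat.le_add_left k i)
    refine (hf _).trans ?_
    rw [neg_add_rev, Real.rpow_add (hQ.trans_le hQk), ← mul_assoc]
    gcongr ?_ * _
    exact mul_le_mul_of_nonneg_left (Real.rpow_le_rpow_of_nonpos hQ hQk (by linarith)) hc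
  have hinj : Function.Injective fun i : ℕ => i + k := add_left_injective k
  calc
    _ = ‖∑' i, f (i + k)‖ := by rw [hhead, ← hfsum.sum_add_tsum_nat_add k, add_sub_cancel_left]
    _ ≤ c * Q ^ (-κ) * ∑' i : ℕ, ((i + k : ℕ) : ℝ) ^ (-s) :=
      tsum_of_norm_bounded ((hsum.comp_injective hinj).hasSum.mul_left _) htail
    _ ≤ c * Q ^ (-κ) * ∑' q : ℕ, (q : ℝ) ^ (-s) :=
      mul_le_mul_of_nonneg_left
        (tsum_comp_le_tsum_of_inj hsum (fun q => by positivity) hinj) (by positivity)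
    _ = _ := by ring

theorem summable_sum_norm_saq {A : Matrix (Fin n) (Fin n) ℤ} (hAs : A.IsSymm) (hA : A.det ≠ 0)
    (b : Idx m → ℤ) (hn : (m : ℝ) * (m + 1) / 2 + 1 < n / 2) :
    Summable fun q : ℕ => ((q : ℝ) ^ (m * n))⁻¹ * ∑ a ∈ resid m (q : ℤ), ‖Saq A (q : ℤ) a b‖ :=
  .of_nonneg_of_le (fun q => by positivity) (sum_norm_saq_le hAs hA b)
    ((Real.summable_nat_rpow.2 (by linarith)).mul_left _)

theorem norm_sing_sub_singT_le {A : Matrix (Fin n) (Fin n) ℤ} (hAs : A.IsSymm) (hA : A.det ≠ 0)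
    (B : Matrix (Fin m) (Fin m) ℤ) {κ Q : ℝ} (hκ : 0 ≤ κ)
    (hn : κ < n / 2 - ((m : ℝ) * (m + 1) / 2 + 1)) (hQ : 0 < Q) :
    ‖Sing A B - SingT A B Q‖ ≤
      weylConst m A * (∑' q : ℕ, (q : ℝ) ^ (-(n / 2 - (m : ℝ) * (m + 1) / 2 - κ))) * Q ^ (-κ) := by
  refine norm_tsum_sub_sum_Icc_le (by linarith) hκ hQ fun q =>
    (norm_sTerm_le A B q).trans ((sum_norm_saq_le hAs hA _ q).trans_eq ?_)
  ring_nf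

end SingularSeries

section Parameters

variable {m : ℕ} [NeZero m] {B : Matrix (Fin m) (Fin m) ℤ}

theorem one_le_inv_gamI {i : Fin m} (h2 : 2 ≤ B 0 0) (hi : B 0 0 ≤ B i i) :
    1 ≤ (gamI B i)⁻¹ := by
  have h2' : (2 : ℝ) ≤ B 0 0 := by exact_mod_cast h2
  rw [gamI, inv_div, one_le_div (Real.log_pos (by linarith))]
  exact Real.log_le_log (by linarith) (by exact_mod_cast hi)

theorem natCast_le_gamT (h2 : 2 ≤ B 0 0) (hB : ∀ i, B 0 0 ≤ B i i) : (m : ℝ) ≤ gamT B := by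
  simpa [gamT] using Finset.card_nsmul_le_sum Finset.univ (fun i => (gamI B i)⁻¹) 1
    fun i _ => one_le_inv_gamI h2 (hB i)

theorem div_two_mul_gamT_add_le_half (h2 : 2 ≤ B 0 0) (hB : ∀ i, B 0 0 ≤ B i i) {x : ℝ}
    (hx : 0 ≤ x) : x / (2 * gamT B + (m : ℝ) * ((m : ℝ) - 1)) ≤ x / 2 := by
  have hm : (1 : ℝ) ≤ m := by exact_mod_cast NeZero.one_le
  refine div_le_div_of_nonneg_left hx two_pos ?_
  linarith [natCast_le_gamT h2 hB, mul_nonneg (zero_le_one.trans hm) (sub_nonneg.2 hm)]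

theorem one_le_piP {C : ℝ} (hC : 1 ≤ C) (h2 : 2 ≤ B 0 0) (hB : ∀ i, B 0 0 ≤ B i i) :
    1 ≤ PiP C B := by
  refine Finset.one_le_prod fun i _ => one_le_mul_of_one_le_of_one_le
    (Real.one_le_rpow hC (zero_le_one.trans (one_le_inv_gamI h2 (hB i))))
    (Real.one_le_rpow ?_ (by norm_num))
  exact_mod_cast one_le_two.trans (h2.trans (hB i))

theorem piP_pos {C : ℝ} (hC : 0 < C) (hB : ∀ i, 0 < B i i) : 0 < PiP C B :=
  Finset.prod_pos fun i _ => mul_pos (Real.rpow_pos_of_pos hC _)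
    (Real.rpow_pos_of_pos (Int.cast_pos.2 (hB i)) _)

end Parameters

theorem det_ne_zero_of_posDef_map_intCast {ι : Type*} [Fintype ι] [DecidableEq ι]
    {A : Matrix ι ι ℤ} (hA : (A.map ((↑) : ℤ → ℝ)).PosDef) : A.det ≠ 0 := by
  have hpos := hA.det_pos
  rw [← Int.cast_det] at hpos
  exact_mod_cast hpos.ne'

theorem stmt9_general (m n : ℕ) [NeZero m] {A : Matrix (Fin n) (Fin n) ℤ} (hAs : A.IsSymm)
    (hA : A.det ≠ 0) {C Δ δ : ℝ} (hC : 0 < C) (hΔ : 0 < Δ) (hδ : 0 ≤ δ) :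
    ∃ K : ℝ, 0 < K ∧
      ∀ B : Matrix (Fin m) (Fin m) ℤ, (∀ i, 2 ≤ B i i) →
        2 * δ / Δ < (n : ℝ) / 2 - ((m : ℝ) * ((m : ℝ) + 1) / 2 + 1) →
        Summable (fun q : ℕ =>
          ((q : ℝ) ^ (m * n))⁻¹ * ∑ a ∈ resid m (q : ℤ), ‖Saq A (q : ℤ) a (bvec B)‖) ∧
        ‖Sing A B - SingT A B (PiP C B ^ Δ)‖ ≤ K * PiP C B ^ (-2 * δ) := by
  have hκ : 0 ≤ 2 * δ / Δ := by positivity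
  set K₀ := weylConst m A *
    ∑' q : ℕ, (q : ℝ) ^ (-((n : ℝ) / 2 - (m : ℝ) * (m + 1) / 2 - 2 * δ / Δ))
  refine ⟨K₀ + 1, by positivity, fun B hB hn => ?_⟩
  have hP : 0 < PiP C B := piP_pos hC fun i => two_pos.trans_le (hB i)
  refine ⟨summable_sum_norm_saq hAs hA _ (by linarith), ?_⟩
  calc ‖Sing A B - SingT A B (PiP C B ^ Δ)‖ ≤ K₀ * (PiP C B ^ Δ) ^ (-(2 * δ / Δ)) :=
        norm_sing_sub_singT_le hAs hA B hκ hn (Real.rpow_pos_of_pos hP Δ)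
    _ = K₀ * PiP C B ^ (-2 * δ) := by
        rw [← Real.rpow_mul hP.le, mul_neg, mul_div_cancel₀ _ hΔ.ne', neg_mul]
    _ ≤ (K₀ + 1) * PiP C B ^ (-2 * δ) := by gcongr; exact le_add_of_nonneg_right zero_le_one

/-- Lemma 5.1, singular series convergence. -/
theorem stmt9 (m n : ℕ) [NeZero m] [NeZero n]
    (A : Matrix (Fin n) (Fin n) ℤ) (hAs : A.IsSymm)
    (hApd : (A.map ((↑) : ℤ → ℝ)).PosDef)
    (C : ℝ) (hC : 1 ≤ C)
    (ε Δ δ : ℝ) (hε : 0 < ε) (hΔ0 : 0 < Δ)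
    (hΔ1 : Δ < ((m : ℝ) + 1) / ((m : ℝ) * ((m : ℝ) + 1) / 2 + 1)) (hδ0 : 0 < δ) :
    ∃ K : ℝ, 0 < K ∧
      ∀ B : Matrix (Fin m) (Fin m) ℤ, B.IsSymm →
        (B.map ((↑) : ℤ → ℝ)).PosDef →
        (∀ i j : Fin m, i ≤ j → B i i ≤ B j j) →
        (∀ i j : Fin m, i < j → |B i j| ≤ B i i) →
        2 ≤ B 0 0 →
        (n : ℝ) > (2 * gamT B + (m : ℝ) * ((m : ℝ) - 1)) *
          ((m : ℝ) * ((m : ℝ) + 1) / 2 + 1) →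
        2 * δ / Δ < (n : ℝ) / (2 * gamT B + (m : ℝ) * ((m : ℝ) - 1)) -
          ((m : ℝ) * ((m : ℝ) + 1) / 2 + 1) →
        Summable (fun q : ℕ =>
          (((q : ℝ)) ^ (m * n))⁻¹ * ∑ a ∈ resid m (q : ℤ), ‖Saq A (q : ℤ) a (bvec B)‖) ∧
        ‖Sing A B - SingT A B (PiP C B ^ Δ)‖ ≤ K * PiP C B ^ (-2 * δ + ε) := by
  obtain ⟨K, hK, h⟩ := stmt9_general m n hAs (det_ne_zero_of_posDef_map_intCast hApd)
    (zero_lt_one.trans_le hC) hΔ0 hδ0.le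
  refine ⟨K, hK, fun B _ _ hmono _ h2 _ hδ => ?_⟩
  have hB (i : Fin m) : B 0 0 ≤ B i i := hmono 0 i (Fin.zero_le i)
  obtain ⟨hsum, htail⟩ := h B (fun i => h2.trans (hB i)) (hδ.trans_le
    (sub_le_sub_right (div_two_mul_gamT_add_le_half h2 hB n.cast_nonneg) _))
  refine ⟨hsum, htail.trans (mul_le_mul_of_nonneg_left ?_ hK.le)⟩
  exact Real.rpow_le_rpow_of_exponent_le (one_le_piP hC h2 hB) (by linarith)
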